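/- Let G be an abelian group, ℓ a prime, and σ: G → G the inversion map u ↦ u^{-1}. On H_*(G; F_ℓ), the induced map σ_* sends the class of the cycle [ξ]^(s) ∧ ⟨v_1,...,v_i⟩ to (−1)^{s+i} times itself, where ξ ∈ G has ξ^ℓ = 1 and v_1,...,v_i ∈ G. -/

import Mathlib

open scoped Classical

open Finsupp

/-- Chains of the (normalized) bar complex of `G` over `k`: the free `k`-module
on lists of elements of `G`. -/
abbrev BarChain (G : Type*) [Group G] (k : Type*) [CommRing k] := List G →₀ k

variable {G : Type*} [Group G] {k : Type*} [CommRing k]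

/-- The normalized bar symbol `[x₁|...|x_s]`: zero if some entry equals `1`. -/
noncomputable def barSym (l : List G) : BarChain G k :=
  if (1 : G) ∈ l then 0 else Finsupp.single l 1

/-- Normalization map, killing all basis lists containing `1`. -/
noncomputable def barNorm : BarChain G k →ₗ[k] BarChain G k :=
  Finsupp.lsum k fun l => LinearMap.toSpanSingleton k _ (barSym l)

/-- Merge the `j`-th and `(j+1)`-st entries of a list by multiplying them. -/
def mergeAt (l : List G) (j : ℕ) : List G :=
  l.take j ++ [l.getD j 1 * l.getD (j+1) 1] ++ l.drop (j+2)

/-- The boundary of a bar symbol (normalized convention: symbols with an entry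
equal to `1` are zero). -/
noncomputable def barDList (l : List G) : BarChain G k :=
  if l = [] then 0 else
    barSym l.tail
      + ∑ j ∈ Finset.range (l.length - 1), ((-1 : k)^(j+1)) • barSym (mergeAt l j)
      + ((-1 : k)^l.length) • barSym l.dropLast

/-- The boundary operator of the normalized bar complex. -/
noncomputable def barD : BarChain G k →ₗ[k] BarChain G k :=
  Finsupp.lsum k fun l => LinearMap.toSpanSingleton k _ (barDList l)

/-- The (signed) shuffle of two lists. -/
noncomputable def shuffleList : List G → List G → BarChain G k
  | [], l => Finsupp.single l 1
  | l, [] => Finsupp.single l 1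
  | x :: xs, y :: ys =>
      Finsupp.mapDomain (x :: ·) (shuffleList xs (y :: ys))
        + ((-1 : k)^(xs.length + 1)) • Finsupp.mapDomain (y :: ·) (shuffleList (x :: xs) ys)
  termination_by l1 l2 => l1.length + l2.length

/-- The bilinear shuffle product on bar chains. -/
noncomputable def barSh : BarChain G k →ₗ[k] BarChain G k →ₗ[k] BarChain G k :=
  Finsupp.lsum k fun l1 => LinearMap.toSpanSingleton k _
    ((Finsupp.lsum k fun l2 => LinearMap.toSpanSingleton k _ (shuffleList l1 l2) :
      BarChain G k →ₗ[k] BarChain G k))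

/-- The shuffle product in the normalized bar complex. -/
noncomputable def barNSh (a b : BarChain G k) : BarChain G k :=
  barNorm (barSh a b)

/-- The chain `[ζ]^(s) = Σ_{i₁,...,i_s = 1}^{ℓ-1} [ζ^{i₁}|ζ|...|ζ^{i_s}|ζ]`. -/
noncomputable def zetaChain (ℓ : ℕ) (ζ : G) (s : ℕ) : BarChain G k :=
  ∑ f : Fin s → Fin (ℓ - 1),
    barSym ((List.ofFn (fun j => [ζ ^ ((f j : ℕ) + 1), ζ])).flatten)

/-- The iterated shuffle product `⟨x₁,...,x_i⟩ = [x₁] ∧ ... ∧ [x_i]`. -/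
noncomputable def wedgeList (l : List G) : BarChain G k :=
  l.foldr (fun g acc => barNSh (barSym [g]) acc) (barSym [])

/-!
Extend the first entry of a symbol linearly to the group algebra. The product
`x ∘ y = xy - x - y` then absorbs the two outer faces of the bar boundary, which becomes
`∂[x|y|C] = -[x ∘ y|C] - [x|∂[y|C]]`.

Since `x⁻¹ + x = -(x ∘ x⁻¹ + 1 ∘ 1)` and `[x ∘ y]` is a boundary, `[x⁻¹]` is homologous to `-[x]`;
the Leibniz rule for the shuffle product gives the sign `(-1)^i` on `⟨v₁,...,v_i⟩`.

Up to degenerate symbols, `[ξ]^(s)` is `[ν|ξ|...|ν|ξ]` for the norm element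
`ν = 1 + ξ + ... + ξ^(ℓ-1)`. As `νξ = ν` and `ν` has augmentation `ℓ = 0`, the product `ν ∘ ξ`
vanishes, so `[ν|x|C]` behaves in `x` as `[x]` does in degree one. Inversion fixes `ν`, and
therefore contributes one sign for each of the `s` entries `ξ`.
-/

section BarWords

/-- The bilinear operation `u ⊗ [x₂|...|x_n] ↦ [u|x₂|...|x_n]`, the first entry being extended
linearly to the group algebra, so that every nonempty symbol is of the form `barCons u C`. -/
noncomputable def barCons : MonoidAlgebra k G →ₗ[k] BarChain G k →ₗ[k] BarChain G k :=
  (Finsupp.linearCombination k fun x => Finsupp.lmapDomain k k (x :: ·)) ∘ₗ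
    (MonoidAlgebra.coeffLinearEquiv k).toLinearMap

theorem barCons_single_eq_mapDomain (x : G) (C : BarChain G k) :
    barCons (MonoidAlgebra.single x 1) C = Finsupp.mapDomain (x :: ·) C := by
  simp [barCons]

theorem barCons_single (x : G) (l : List G) :
    barCons (MonoidAlgebra.single x 1) (Finsupp.single l 1 : BarChain G k) =
      Finsupp.single (x :: l) 1 := by
  rw [barCons_single_eq_mapDomain, Finsupp.mapDomain_single]

@[elab_as_elim]
theorem barChain_induction {p : BarChain G k → Prop} (nil : p (Finsupp.single [] 1))
    (cons : ∀ u C, p C → p (barCons u C))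
    (smul_add : ∀ (r : k) C D, p C → p D → p (r • C + D)) (C : BarChain G k) : p C := by
  have single (l : List G) : p (Finsupp.single l 1) := by
    induction l with
    | nil => exact nil
    | cons x l ih => exact barCons_single (k := k) x l ▸ cons _ _ ih
  have zero : p 0 := by simpa using smul_add (-1) _ _ nil nil
  induction C using Finsupp.induction_linear with
  | zero => exact zero
  | add C D hC hD => simpa using smul_add 1 C D hC hD
  | single l r => simpa using smul_add r _ _ (single l) zero

/-- The degree involution, multiplication by `(-1)^n` on chains of degree `n`. It carries the
signs of the Leibniz rule. -/
noncomputable def barSign : BarChain G k →ₗ[k] BarChain G k :=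
  Finsupp.linearCombination k fun l => (-1 : k) ^ l.length • Finsupp.single l 1

theorem barSign_single (l : List G) :
    barSign (Finsupp.single l 1 : BarChain G k) = (-1 : k) ^ l.length • Finsupp.single l 1 := by
  simp [barSign]

theorem barSign_nil : barSign (Finsupp.single [] 1 : BarChain G k) = Finsupp.single [] 1 := by
  simp [barSign]

theorem barSign_barCons (u : MonoidAlgebra k G) (C : BarChain G k) :
    barSign (barCons u C) = -barCons u (barSign C) := by
  suffices h : barCons.compr₂ barSign = barCons.compl₂ (-barSign (G := G) (k := k)) by
    simpa using LinearMap.congr_fun₂ h u C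
  ext x l : 4
  simp [barCons_single, barSign_single, pow_succ, -Finsupp.smul_single]

theorem barSign_barSign (C : BarChain G k) : barSign (barSign C) = C := by
  induction C using barChain_induction with
  | nil => simp only [barSign_nil]
  | cons u C ih => simp only [barSign_barCons, map_neg, neg_neg, ih]
  | smul_add r C D hC hD => simp only [map_add, map_smul, hC, hD]

end BarWords

section Boundary

/-- The augmentation of the group algebra, `g ↦ 1`. -/
noncomputable def augmentation : MonoidAlgebra k G →ₐ[k] k := MonoidAlgebra.lift k k G 1

/-- The product `x ∘ y = xy - x - y` of two group elements, extended bilinearly to the group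
algebra. Modulo constants it is the product `(x - 1)(y - 1)` of the augmentation ideal. -/
noncomputable def reducedMul :
    MonoidAlgebra k G →ₗ[k] MonoidAlgebra k G →ₗ[k] MonoidAlgebra k G :=
  LinearMap.mk₂ k (fun u v => u * v - augmentation v • u - augmentation u • v)
    (by intros; simp only [map_add, add_mul]; module)
    (by intros; simp only [map_smul, smul_mul_assoc, smul_eq_mul]; module)
    (by intros; simp only [map_add, mul_add]; module)
    (by intros; simp only [map_smul, mul_smul_comm, smul_eq_mul]; module)

theorem augmentation_single (x : G) (r : k) : augmentation (MonoidAlgebra.single x r) = r := by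
  simp [augmentation, MonoidAlgebra.lift_single]

theorem reducedMul_apply (u v : MonoidAlgebra k G) :
    reducedMul u v = u * v - augmentation v • u - augmentation u • v := rfl

theorem reducedMul_single_single (x y : G) :
    reducedMul (MonoidAlgebra.single x (1 : k)) (MonoidAlgebra.single y 1) =
      MonoidAlgebra.single (x * y) 1 - MonoidAlgebra.single x 1 - MonoidAlgebra.single y 1 := by
  simp [reducedMul_apply, augmentation_single, MonoidAlgebra.single_mul_single]

/-- The operation `u ⊗ [y|x₂|...|x_n] ↦ [u ∘ y|x₂|...|x_n]` given by `reducedMul` on the first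
entry, and zero on the empty symbol. -/
noncomputable def barMulHead : MonoidAlgebra k G →ₗ[k] BarChain G k →ₗ[k] BarChain G k :=
  LinearMap.flip <| Finsupp.linearCombination k fun
    | [] => 0
    | y :: l => barCons.flip (Finsupp.single l 1) ∘ₗ reducedMul.flip (MonoidAlgebra.single y 1)

theorem barMulHead_nil (u : MonoidAlgebra k G) :
    barMulHead u (Finsupp.single [] 1 : BarChain G k) = 0 := by
  simp [barMulHead]

theorem barMulHead_barCons (u v : MonoidAlgebra k G) (C : BarChain G k) :
    barMulHead u (barCons v C) = barCons (reducedMul u v) C := by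
  suffices h : barCons.compr₂ (barMulHead u) = barCons ∘ₗ reducedMul u from
    LinearMap.congr_fun₂ h v C
  ext y l : 4
  simp [barCons_single, barMulHead]

/-- The boundary of the unnormalized bar complex. Written through `reducedMul`, the two outer
faces of a symbol are absorbed into the products of adjacent entries. -/
noncomputable def barBoundary : BarChain G k →ₗ[k] BarChain G k :=
  Finsupp.linearCombination k boundaryOfList
where
  /-- The boundary of a single symbol. -/
  boundaryOfList : List G → BarChain G k
    | [] => 0
    | x :: l => -barMulHead (MonoidAlgebra.single x 1) (Finsupp.single l 1) -
        barCons (MonoidAlgebra.single x 1) (boundaryOfList l)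

theorem barBoundary_nil : barBoundary (Finsupp.single [] 1 : BarChain G k) = 0 := by
  simp [barBoundary, barBoundary.boundaryOfList]

theorem barBoundary_barCons (u : MonoidAlgebra k G) (C : BarChain G k) :
    barBoundary (barCons u C) = -barMulHead u C - barCons u (barBoundary C) := by
  suffices h : barCons.compr₂ (barBoundary (G := G) (k := k)) =
      barMulHead.compr₂ (-LinearMap.id (R := k) (M := BarChain G k)) +
        barCons.compl₂ (-barBoundary (G := G) (k := k)) by
    simpa [sub_eq_add_neg] using LinearMap.congr_fun₂ h u C
  ext x l : 4
  simp [barCons_single, barBoundary, barBoundary.boundaryOfList, sub_eq_add_neg]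

theorem barSign_barMulHead (u : MonoidAlgebra k G) (C : BarChain G k) :
    barSign (barMulHead u C) = barMulHead u (barSign C) := by
  induction C using barChain_induction with
  | nil => simp only [barMulHead_nil, barSign_nil, map_zero]
  | cons v C _ => simp only [barMulHead_barCons, barSign_barCons, map_neg]
  | smul_add r C D hC hD => simp only [map_add, map_smul, hC, hD]

theorem barSign_barBoundary (C : BarChain G k) :
    barSign (barBoundary C) = -barBoundary (barSign C) := by
  induction C using barChain_induction with
  | nil => simp only [barBoundary_nil, barSign_nil, map_zero, neg_zero]
  | cons u C ih =>
    simp only [barBoundary_barCons, barSign_barCons, barSign_barMulHead, map_sub, map_neg, ih]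
    abel
  | smul_add r C D hC hD => simp only [map_add, map_smul, hC, hD]; module

end Boundary

section Shuffle

theorem barSh_single_single (a b : List G) :
    barSh (Finsupp.single a 1 : BarChain G k) (Finsupp.single b 1) = shuffleList a b := by
  simp [barSh]

theorem barSh_nil_left (C : BarChain G k) : barSh (Finsupp.single [] 1) C = C := by
  suffices h : barSh (Finsupp.single [] 1) = (LinearMap.id : BarChain G k →ₗ[k] _) from
    LinearMap.congr_fun h C
  ext l : 2
  simp [barSh_single_single, shuffleList]

theorem barSh_nil_right (C : BarChain G k) : barSh C (Finsupp.single [] 1) = C := by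
  suffices h : barSh.flip (Finsupp.single [] 1) = (LinearMap.id : BarChain G k →ₗ[k] _) from
    LinearMap.congr_fun h C
  ext l : 2
  cases l <;> simp [barSh_single_single, shuffleList]

theorem barSh_barCons_single (x y : G) (C E : BarChain G k) :
    barSh (barCons (MonoidAlgebra.single x 1) C) (barCons (MonoidAlgebra.single y 1) E) =
      barCons (MonoidAlgebra.single x 1) (barSh C (barCons (MonoidAlgebra.single y 1) E)) -
        barCons (MonoidAlgebra.single y 1)
          (barSh (barCons (MonoidAlgebra.single x 1) (barSign C)) E) := by
  let X : BarChain G k →ₗ[k] BarChain G k := Finsupp.lmapDomain k k (x :: ·)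
  let Y : BarChain G k →ₗ[k] BarChain G k := Finsupp.lmapDomain k k (y :: ·)
  suffices h : (barSh ∘ₗ X).compl₂ Y =
      (barSh.compl₂ Y).compr₂ X + (barSh ∘ₗ X ∘ₗ barSign).compr₂ (-Y) by
    simpa [X, Y, barCons_single_eq_mapDomain, sub_eq_add_neg] using LinearMap.congr_fun₂ h C E
  ext a b : 4
  simp [X, Y, barSign_single, barSh_single_single, shuffleList, pow_succ, -Finsupp.smul_single]

theorem barSh_barCons_barCons (u v : MonoidAlgebra k G) (C E : BarChain G k) :
    barSh (barCons u C) (barCons v E) =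
      barCons u (barSh C (barCons v E)) - barCons v (barSh (barCons u (barSign C)) E) := by
  induction u using MonoidAlgebra.induction_linear with
  | zero => simp
  | add u u' hu hu' => simp only [map_add, LinearMap.add_apply, hu, hu']; abel
  | single x r =>
    induction v using MonoidAlgebra.induction_linear with
    | zero => simp
    | add v v' hv hv' => simp only [map_add, LinearMap.add_apply, hv, hv']; abel
    | single y t =>
      rw [← mul_one r, ← mul_one t]
      simp only [← smul_eq_mul, ← MonoidAlgebra.smul_single, map_smul, LinearMap.smul_apply,
        barSh_barCons_single]
      module

theorem barMulHead_barSh_barCons (u v : MonoidAlgebra k G) (C E : BarChain G k) :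
    barMulHead u (barSh C (barCons v E)) =
      barSh (barMulHead u C) (barCons v E) + barCons (reducedMul u v) (barSh (barSign C) E) -
        barCons v (barSh (barMulHead u (barSign C)) E) := by
  induction C using barChain_induction with
  | nil =>
    simp only [barSh_nil_left, barMulHead_barCons, barMulHead_nil, barSign_nil, map_zero,
      LinearMap.zero_apply, zero_add, sub_zero]
  | cons w C _ =>
    simp only [barSh_barCons_barCons, barMulHead_barCons, barSign_barCons, map_sub, map_neg,
      LinearMap.neg_apply]
    abel
  | smul_add r C D hC hD =>
    simp only [map_add, map_smul, LinearMap.add_apply, LinearMap.smul_apply, hC, hD]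
    module

theorem barMulHead_barCons_barSh (u v : MonoidAlgebra k G) (C E : BarChain G k) :
    barMulHead v (barSh (barCons u C) E) =
      barCons (reducedMul v u) (barSh C E) + barSh (barCons u C) (barMulHead v E) -
        barCons u (barSh C (barMulHead v E)) := by
  induction E using barChain_induction with
  | nil =>
    simp only [barSh_nil_right, barMulHead_barCons, barMulHead_nil, map_zero, add_zero, sub_zero]
  | cons w E _ =>
    simp only [barSh_barCons_barCons, barMulHead_barCons, map_sub]
    abel
  | smul_add r E F hE hF =>
    simp only [map_add, map_smul, hE, hF]
    module

end Shuffle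

section Functoriality

variable {H : Type*} [Group H]

/-- The map of bar chains induced by a group homomorphism, applied to every entry. -/
noncomputable def barMap (f : G →* H) : BarChain G k →ₗ[k] BarChain H k :=
  Finsupp.lmapDomain k k (List.map f)

theorem barMap_single (f : G →* H) (l : List G) :
    barMap f (Finsupp.single l 1 : BarChain G k) = Finsupp.single (l.map f) 1 := by
  simp [barMap]

theorem barMap_nil (f : G →* H) :
    barMap f (Finsupp.single [] 1 : BarChain G k) = Finsupp.single [] 1 :=
  barMap_single f []

theorem barMap_barCons (f : G →* H) (u : MonoidAlgebra k G) (C : BarChain G k) :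
    barMap f (barCons u C) = barCons (MonoidAlgebra.mapDomainAlgHom k k f u) (barMap f C) := by
  suffices h : barCons.compr₂ (barMap f) =
      barCons.compl₁₂ (MonoidAlgebra.mapDomainAlgHom k k f).toLinearMap (barMap f) from
    LinearMap.congr_fun₂ h u C
  ext x l : 4
  simp [barCons_single, barMap_single]

theorem augmentation_mapDomainAlgHom (f : G →* H) (u : MonoidAlgebra k G) :
    augmentation (MonoidAlgebra.mapDomainAlgHom k k f u) = augmentation u := by
  suffices h : augmentation.comp (MonoidAlgebra.mapDomainAlgHom k k f) = augmentation from
    DFunLike.congr_fun h u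
  ext x
  simp [augmentation_single]

theorem mapDomainAlgHom_reducedMul (f : G →* H) (u v : MonoidAlgebra k G) :
    MonoidAlgebra.mapDomainAlgHom k k f (reducedMul u v) =
      reducedMul (MonoidAlgebra.mapDomainAlgHom k k f u)
        (MonoidAlgebra.mapDomainAlgHom k k f v) := by
  simp only [reducedMul_apply, map_sub, map_mul, map_smul, augmentation_mapDomainAlgHom]

theorem barMap_barMulHead (f : G →* H) (u : MonoidAlgebra k G) (C : BarChain G k) :
    barMap f (barMulHead u C) =
      barMulHead (MonoidAlgebra.mapDomainAlgHom k k f u) (barMap f C) := by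
  induction C using barChain_induction with
  | nil => simp only [barMulHead_nil, barMap_nil, map_zero]
  | cons v C _ => simp only [barMulHead_barCons, barMap_barCons, mapDomainAlgHom_reducedMul]
  | smul_add r C D hC hD => simp only [map_add, map_smul, hC, hD]

theorem barMap_barBoundary (f : G →* H) (C : BarChain G k) :
    barMap f (barBoundary C) = barBoundary (barMap f C) := by
  induction C using barChain_induction with
  | nil => simp only [barBoundary_nil, barMap_nil, map_zero]
  | cons u C ih =>
    simp only [barBoundary_barCons, barMap_barCons, barMap_barMulHead, map_sub, map_neg, ih]
  | smul_add r C D hC hD => simp only [map_add, map_smul, hC, hD]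

theorem mapDomain_map_shuffleList (f : G → H) (a b : List G) :
    Finsupp.mapDomain (List.map f) (shuffleList a b : BarChain G k) =
      shuffleList (a.map f) (b.map f) := by
  induction a generalizing b with
  | nil => simp [shuffleList]
  | cons x a iha =>
    induction b with
    | nil => simp [shuffleList]
    | cons y b ihb =>
      have comm (z : G) (C : BarChain G k) : Finsupp.mapDomain (List.map f)
          (Finsupp.mapDomain (z :: ·) C) =
            Finsupp.mapDomain (f z :: ·) (Finsupp.mapDomain (List.map f) C) := by
        simp only [← Finsupp.mapDomain_comp, Function.comp_def, List.map_cons]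
      simp only [List.map_cons] at ihb
      simp only [shuffleList, List.map_cons, Finsupp.mapDomain_add, Finsupp.mapDomain_smul, comm,
        iha, ihb, List.length_map]

theorem barMap_barSh (f : G →* H) (C E : BarChain G k) :
    barMap f (barSh C E) = barSh (barMap f C) (barMap f E) := by
  suffices h : barSh.compr₂ (barMap f) = barSh.compl₁₂ (barMap f) (barMap (k := k) f) from
    LinearMap.congr_fun₂ h C E
  ext a b : 4
  simpa [barMap, barSh_single_single] using mapDomain_map_shuffleList f a b

end Functoriality

section Leibniz

variable {A : Type*} [CommGroup A]

theorem reducedMul_comm (u v : MonoidAlgebra k A) : reducedMul u v = reducedMul v u := by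
  simp only [reducedMul_apply, mul_comm u v]
  abel

theorem barBoundary_barSh_single (a b : List A) :
    barBoundary (barSh (Finsupp.single a 1 : BarChain A k) (Finsupp.single b 1)) =
      barSh (barBoundary (Finsupp.single a 1)) (Finsupp.single b 1) +
        barSh (barSign (Finsupp.single a 1)) (barBoundary (Finsupp.single b 1)) := by
  induction a generalizing b with
  | nil => simp only [barSh_nil_left, barBoundary_nil, barSign_nil, map_zero,
      LinearMap.zero_apply, zero_add]
  | cons x a iha =>
    induction b with
    | nil => simp only [barSh_nil_right, barBoundary_nil, map_zero, add_zero]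
    | cons y b ihb =>
      have iha' := iha (y :: b)
      simp only [← barCons_single (k := k)] at iha' ihb ⊢
      generalize MonoidAlgebra.single x (1 : k) = u at *
      generalize MonoidAlgebra.single y (1 : k) = v at *
      set C : BarChain A k := Finsupp.single a 1
      set E : BarChain A k := Finsupp.single b 1
      have ihb' : barBoundary (barSh (barCons u (barSign C)) E) =
          barSh (barBoundary (barCons u (barSign C))) E - barSh (barCons u C) (barBoundary E) := by
        have sq : (-1 : k) ^ a.length * (-1) ^ a.length = 1 := by rw [← mul_pow]; simp
        have hC : barSign C = (-1 : k) ^ a.length • C := barSign_single a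
        simp only [barSign_barCons, hC, map_smul, map_neg, LinearMap.smul_apply,
          LinearMap.neg_apply] at ihb ⊢
        rw [ihb, smul_add, smul_neg, smul_smul, sq, one_smul, ← sub_eq_add_neg]
      simp only [barSh_barCons_barCons, barBoundary_barCons, barSign_barCons, map_add, map_sub,
        map_neg, LinearMap.sub_apply, LinearMap.neg_apply, iha', ihb', barMulHead_barSh_barCons,
        barMulHead_barCons_barSh, reducedMul_comm v u, barSign_barSign, barSign_barBoundary]
      abel

theorem barBoundary_barSh (C E : BarChain A k) :
    barBoundary (barSh C E) = barSh (barBoundary C) E + barSh (barSign C) (barBoundary E) := by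
  suffices h : barSh.compr₂ barBoundary =
      barSh (G := A) (k := k) ∘ₗ barBoundary + (barSh ∘ₗ barSign).compl₂ barBoundary from
    LinearMap.congr_fun₂ h C E
  ext a b : 4
  exact barBoundary_barSh_single a b

theorem barSh_smodEq {C C' E E' : BarChain A k} (hC : barBoundary C = 0)
    (hE' : barBoundary E' = 0) (h : C ≡ C' [SMOD LinearMap.range (barBoundary (k := k))])
    (h' : E ≡ E' [SMOD LinearMap.range (barBoundary (k := k))]) :
    barSh C E ≡ barSh C' E' [SMOD LinearMap.range (barBoundary (k := k))] := by
  rw [SModEq.sub_mem] at h h'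
  obtain ⟨c, hc⟩ := h
  obtain ⟨e, he⟩ := h'
  have left : barBoundary (barSh c E') = barSh C E' - barSh C' E' := by
    rw [barBoundary_barSh, hc, hE', map_zero, add_zero, map_sub, LinearMap.sub_apply]
  have right : barBoundary (barSh (barSign C) e) = barSh C E - barSh C E' := by
    have hC' : barBoundary (barSign C) = 0 := by
      rw [← neg_eq_zero, ← barSign_barBoundary, hC, map_zero]
    rw [barBoundary_barSh, hC', map_zero, LinearMap.zero_apply, zero_add, barSign_barSign, he,
      map_sub]
  rw [SModEq.sub_mem]
  exact ⟨barSh (barSign C) e + barSh c E', by rw [map_add, left, right, sub_add_sub_cancel]⟩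

end Leibniz

section Inversion

variable {A : Type*} [CommGroup A]

theorem map_single_inv_smodEq {M : Type*} [AddCommGroup M] [Module k M]
    (F : MonoidAlgebra k G →ₗ[k] M) {S : Submodule k M} (x : G)
    (hx : F (reducedMul (MonoidAlgebra.single x 1) (MonoidAlgebra.single x⁻¹ 1)) ∈ S)
    (hone : F (reducedMul (MonoidAlgebra.single 1 1) (MonoidAlgebra.single 1 1)) ∈ S) :
    F (MonoidAlgebra.single x⁻¹ 1) ≡ -F (MonoidAlgebra.single x 1) [SMOD S] := by
  rw [SModEq.sub_mem]
  convert S.neg_mem (S.add_mem hx hone) using 1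
  simp only [reducedMul_single_single, mul_inv_cancel, mul_one, map_sub]
  abel

theorem barBoundary_singleton (x : G) : barBoundary (Finsupp.single [x] 1 : BarChain G k) = 0 := by
  rw [← barCons_single, barBoundary_barCons, barMulHead_nil, barBoundary_nil, map_zero, neg_zero,
    sub_zero]

theorem singleton_inv_smodEq (x : G) : (Finsupp.single [x⁻¹] 1 : BarChain G k) ≡
    -Finsupp.single [x] 1 [SMOD LinearMap.range (barBoundary (G := G) (k := k))] := by
  have mem (y z : G) : barCons (reducedMul (MonoidAlgebra.single y 1) (MonoidAlgebra.single z 1))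
      (Finsupp.single [] 1) ∈ LinearMap.range (barBoundary (G := G) (k := k)) := by
    refine ⟨-Finsupp.single [y, z] 1, ?_⟩
    rw [map_neg, ← barCons_single, barBoundary_barCons, barBoundary_singleton, ← barCons_single,
      barMulHead_barCons, map_zero, sub_zero, neg_neg]
  simpa only [LinearMap.flip_apply, barCons_single] using
    map_single_inv_smodEq ((barCons (k := k)).flip (Finsupp.single [] 1)) x (mem x x⁻¹) (mem 1 1)

/-- The iterated shuffle product `[x₁] ∧ ... ∧ [x_i]` in the unnormalized bar complex. -/
noncomputable def barWedge (v : List G) : BarChain G k :=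
  v.foldr (fun x => barSh (Finsupp.single [x] 1)) (Finsupp.single [] 1)

theorem barWedge_cons (x : G) (v : List G) :
    barWedge (x :: v) = barSh (Finsupp.single [x] 1 : BarChain G k) (barWedge v) := rfl

theorem barBoundary_barWedge (v : List A) : barBoundary (barWedge v : BarChain A k) = 0 := by
  induction v with
  | nil => exact barBoundary_nil
  | cons x v ih =>
    rw [barWedge_cons, barBoundary_barSh, barBoundary_singleton, ih, map_zero, map_zero,
      LinearMap.zero_apply, add_zero]

theorem barMap_inv_barWedge_smodEq (v : List A) :
    barMap invMonoidHom (barWedge v : BarChain A k) ≡ (-1 : k) ^ v.length • barWedge v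
      [SMOD LinearMap.range (barBoundary (G := A) (k := k))] := by
  induction v with
  | nil => simp [barWedge, barMap_nil]
  | cons x v ih =>
    calc
      _ = barSh (Finsupp.single [x⁻¹] 1) (barMap invMonoidHom (barWedge v : BarChain A k)) := by
        rw [barWedge_cons, barMap_barSh, barMap_single, List.map_singleton, invMonoidHom_apply]
      _ ≡ barSh (-Finsupp.single [x] 1) ((-1 : k) ^ v.length • barWedge v) [SMOD _] :=
        barSh_smodEq (barBoundary_singleton _) (by rw [map_smul, barBoundary_barWedge, smul_zero])
          (singleton_inv_smodEq x) ih
      _ = _ := by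
        rw [map_neg, LinearMap.neg_apply, map_smul, ← barWedge_cons, List.length_cons, pow_succ,
          mul_neg_one, neg_smul]

end Inversion

section Tower

/-- The symbol `[u|w|u|w|...|u|w]` with `s` pairs, extended bilinearly to the group algebra. -/
noncomputable def barTower (u w : MonoidAlgebra k G) : ℕ → BarChain G k
  | 0 => Finsupp.single [] 1
  | s + 1 => barCons u (barCons w (barTower u w s))

theorem barMap_barTower {H : Type*} [Group H] (f : G →* H) (u w : MonoidAlgebra k G) (s : ℕ) :
    barMap f (barTower u w s) = barTower (MonoidAlgebra.mapDomainAlgHom k k f u)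
      (MonoidAlgebra.mapDomainAlgHom k k f w) s := by
  induction s with
  | zero => exact barMap_nil f
  | succ s ih => simp only [barTower, barMap_barCons, ih]

theorem barMulHead_barTower {u t : MonoidAlgebra k G} (h : reducedMul t u = 0)
    (w : MonoidAlgebra k G) (s : ℕ) : barMulHead t (barTower u w s) = 0 := by
  cases s with
  | zero => exact barMulHead_nil t
  | succ s => rw [barTower, barMulHead_barCons, h, map_zero, LinearMap.zero_apply]

theorem barBoundary_barCons_barCons {u w : MonoidAlgebra k G} (h : reducedMul u w = 0)
    (C : BarChain G k) :
    barBoundary (barCons u (barCons w C)) =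
      barCons u (barMulHead w C + barCons w (barBoundary C)) := by
  rw [barBoundary_barCons, barMulHead_barCons, h, barBoundary_barCons]
  simp only [map_zero, LinearMap.zero_apply, map_sub, map_neg, map_add]
  abel

theorem barBoundary_barTower {u w : MonoidAlgebra k G} (huw : reducedMul u w = 0)
    (hwu : reducedMul w u = 0) (s : ℕ) : barBoundary (barTower u w s) = 0 := by
  induction s with
  | zero => exact barBoundary_nil
  | succ s ih =>
    simp only [barTower, barBoundary_barCons_barCons huw, barMulHead_barTower hwu, ih, map_zero,
      add_zero]

theorem reducedMul_single_eq_zero {u : MonoidAlgebra k G} (hu : augmentation u = 0) {x : G}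
    (hx : u * MonoidAlgebra.single x 1 = u) : reducedMul u (MonoidAlgebra.single x 1) = 0 := by
  rw [reducedMul_apply, hx, augmentation_single, one_smul, hu, zero_smul, sub_self, sub_zero]

theorem barCons_barCons_mem_range {u w : MonoidAlgebra k G} (huw : reducedMul u w = 0)
    (hwu : reducedMul w u = 0) {C : BarChain G k}
    (hC : C ∈ LinearMap.range (barBoundary ∘ₗ barCons u)) :
    barCons u (barCons w C) ∈ LinearMap.range (barBoundary ∘ₗ barCons u) := by
  obtain ⟨E, rfl⟩ := hC
  refine ⟨barCons w (barCons u E), ?_⟩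
  rw [LinearMap.comp_apply, barBoundary_barCons_barCons huw, barMulHead_barCons, hwu, map_zero,
    LinearMap.zero_apply, zero_add, LinearMap.comp_apply]

theorem barCons_barCons_reducedMul_mem_range {u w t : MonoidAlgebra k G}
    (huw : reducedMul u w = 0) {C : BarChain G k} (htC : barMulHead t C = 0)
    (hC : barBoundary C = 0) :
    barCons u (barCons (reducedMul w t) C) ∈ LinearMap.range (barBoundary ∘ₗ barCons u) := by
  refine ⟨barCons w (barCons t C), ?_⟩
  have htC' : barBoundary (barCons t C) = 0 := by
    rw [barBoundary_barCons, htC, hC, map_zero, neg_zero, sub_zero]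
  rw [LinearMap.comp_apply, barBoundary_barCons_barCons huw, barMulHead_barCons, htC', map_zero,
    add_zero]

variable {A : Type*} [CommGroup A]

theorem barTower_inv_smodEq {u : MonoidAlgebra k A} (hu : augmentation u = 0) {x : A}
    (hx : u * MonoidAlgebra.single x 1 = u) (s : ℕ) :
    barTower u (MonoidAlgebra.single x⁻¹ 1) s ≡
      (-1 : k) ^ s • barTower u (MonoidAlgebra.single x 1) s
      [SMOD LinearMap.range (barBoundary (G := A) (k := k) ∘ₗ barCons u)] := by
  set S : Submodule k (BarChain A k) := LinearMap.range (barBoundary ∘ₗ barCons u)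
  have hx_inv : u * MonoidAlgebra.single x⁻¹ 1 = u := by
    conv_lhs => rw [← hx, mul_assoc, MonoidAlgebra.single_mul_single, mul_inv_cancel, mul_one,
      ← MonoidAlgebra.one_def, mul_one]
  have red_x := reducedMul_single_eq_zero hu hx
  have red_inv := reducedMul_single_eq_zero hu hx_inv
  have red_one := reducedMul_single_eq_zero hu (mul_one u)
  induction s with
  | zero => simp [barTower]
  | succ s ih =>
    set T : BarChain A k := (-1 : k) ^ s • barTower u (MonoidAlgebra.single x 1) s with T_def
    have boundary_T : barBoundary T = 0 := by
      rw [map_smul, barBoundary_barTower red_x (reducedMul_comm u _ ▸ red_x), smul_zero]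
    have mulHead_T {t : MonoidAlgebra k A} (ht : reducedMul u t = 0) : barMulHead t T = 0 := by
      rw [map_smul, barMulHead_barTower (reducedMul_comm u t ▸ ht), smul_zero]
    calc
      _ = barCons u (barCons (MonoidAlgebra.single x⁻¹ 1)
          (barTower u (MonoidAlgebra.single x⁻¹ 1) s)) := rfl
      _ ≡ barCons u (barCons (MonoidAlgebra.single x⁻¹ 1) T) [SMOD S] := by
        rw [SModEq.sub_mem] at ih ⊢
        rw [← map_sub, ← map_sub]
        exact barCons_barCons_mem_range red_inv (reducedMul_comm u _ ▸ red_inv) ih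
      _ ≡ -barCons u (barCons (MonoidAlgebra.single x 1) T) [SMOD S] :=
        map_single_inv_smodEq (barCons u ∘ₗ barCons.flip T) x
          (barCons_barCons_reducedMul_mem_range red_x (mulHead_T red_inv) boundary_T)
          (barCons_barCons_reducedMul_mem_range red_one (mulHead_T red_one) boundary_T)
      _ = _ := by
        rw [T_def, map_smul, map_smul, ← neg_smul, ← mul_neg_one, ← pow_succ, ← barTower]

end Tower

section NormElement

/-- The norm element `1 + x + ... + x^(n-1)` of the group algebra. -/
noncomputable def normElement (k : Type*) [CommRing k] (n : ℕ) (x : G) : MonoidAlgebra k G :=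
  ∑ i ∈ Finset.range n, MonoidAlgebra.single (x ^ i) 1

theorem augmentation_normElement (n : ℕ) (x : G) : augmentation (normElement k n x) = n := by
  simp [normElement, augmentation_single]

theorem normElement_eq_sum_pow_succ {n : ℕ} {x : G} (hx : x ^ n = 1) :
    normElement k n x = ∑ i ∈ Finset.range n, MonoidAlgebra.single (x ^ (i + 1)) 1 := by
  apply add_right_cancel (b := MonoidAlgebra.single (1 : G) (1 : k))
  conv_lhs => rw [normElement, ← hx, ← Finset.sum_range_succ, Finset.sum_range_succ', pow_zero]

theorem normElement_mul_single {n : ℕ} {x : G} (hx : x ^ n = 1) :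
    normElement k n x * MonoidAlgebra.single x 1 = normElement k n x := by
  conv_rhs => rw [normElement_eq_sum_pow_succ hx]
  simp only [normElement, Finset.sum_mul, MonoidAlgebra.single_mul_single, pow_succ, mul_one]

theorem normElement_inv {n : ℕ} {x : G} (hx : x ^ n = 1) :
    normElement k n x⁻¹ = normElement k n x := by
  rw [normElement_eq_sum_pow_succ hx, normElement, ← Finset.sum_range_reflect]
  refine Finset.sum_congr rfl fun i hi => ?_
  have hi : n - 1 - i + (i + 1) = n := by have := Finset.mem_range.1 hi; omega
  rw [inv_pow, inv_eq_of_mul_eq_one_right (by rw [← pow_add, hi, hx])]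

theorem mapDomainAlgHom_normElement {H : Type*} [Group H] (f : G →* H) (n : ℕ) (x : G) :
    MonoidAlgebra.mapDomainAlgHom k k f (normElement k n x) = normElement k n (f x) := by
  simp [normElement]

variable {A : Type*} [CommGroup A]

theorem barMap_inv_barTower_normElement {n : ℕ} {x : A} (hx : x ^ n = 1) (s : ℕ) :
    barMap invMonoidHom (barTower (normElement k n x) (MonoidAlgebra.single x 1) s) =
      barTower (normElement k n x) (MonoidAlgebra.single x⁻¹ 1) s := by
  rw [barMap_barTower, mapDomainAlgHom_normElement]
  simp [normElement_inv hx]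

theorem barMap_inv_barSh_smodEq {n : ℕ} (hn : (n : k) = 0) {x : A} (hx : x ^ n = 1) (s : ℕ)
    (v : List A) :
    barMap invMonoidHom
        (barSh (barTower (normElement k n x) (MonoidAlgebra.single x 1) s) (barWedge v)) ≡
      (-1 : k) ^ (s + v.length) •
        barSh (barTower (normElement k n x) (MonoidAlgebra.single x 1) s) (barWedge v)
      [SMOD LinearMap.range (barBoundary (G := A) (k := k))] := by
  have norm_mul := normElement_mul_single (k := k) hx
  have aug_norm : augmentation (normElement k n x) = 0 := (augmentation_normElement n x).trans hn
  have red := reducedMul_single_eq_zero aug_norm norm_mul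
  have red_symm := reducedMul_comm (normElement k n x) _ ▸ red
  set Z : BarChain A k := barTower (normElement k n x) (MonoidAlgebra.single x 1) s
  have boundary_Z : barBoundary Z = 0 := barBoundary_barTower red red_symm s
  have inv_Z : barMap invMonoidHom Z ≡ (-1 : k) ^ s • Z [SMOD LinearMap.range barBoundary] :=
    barMap_inv_barTower_normElement (k := k) hx s ▸
      (barTower_inv_smodEq aug_norm norm_mul s).mono (LinearMap.range_comp_le_range _ _)
  calc
    _ = barSh (barMap invMonoidHom Z) (barMap invMonoidHom (barWedge v)) := barMap_barSh _ _ _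
    _ ≡ barSh ((-1 : k) ^ s • Z) ((-1 : k) ^ v.length • barWedge v) [SMOD _] :=
      barSh_smodEq (by rw [← barMap_barBoundary, boundary_Z, map_zero])
        (by rw [map_smul, barBoundary_barWedge, smul_zero]) inv_Z (barMap_inv_barWedge_smodEq v)
    _ = _ := by
      rw [map_smul, map_smul, LinearMap.smul_apply, smul_smul, ← pow_add, add_comm]

end NormElement

section Normalization

theorem barNorm_single (l : List G) : barNorm (Finsupp.single l 1 : BarChain G k) = barSym l := by
  simp [barNorm]

theorem barNorm_single_of_one_mem {l : List G} (hl : (1 : G) ∈ l) :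
    barNorm (Finsupp.single l 1 : BarChain G k) = 0 := by
  rw [barNorm_single, barSym, if_pos hl]

theorem barNorm_single_of_one_notMem {l : List G} (hl : (1 : G) ∉ l) :
    barNorm (Finsupp.single l 1 : BarChain G k) = Finsupp.single l 1 := by
  rw [barNorm_single, barSym, if_neg hl]

theorem barNorm_eq_zero {C : BarChain G k} (hC : ∀ l ∈ C.support, (1 : G) ∈ l) :
    barNorm C = 0 := by
  rw [barNorm, Finsupp.lsum_apply]
  refine Finset.sum_eq_zero fun l hl => ?_
  simp [barSym, hC l hl]

theorem barNorm_barMap {H : Type*} [Group H] {f : G →* H} (hf : Function.Injective f)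
    (C : BarChain G k) : barNorm (barMap f C) = barMap f (barNorm C) := by
  suffices h : barNorm ∘ₗ barMap (k := k) f = barMap f ∘ₗ barNorm from LinearMap.congr_fun h C
  ext l : 2
  have one_mem : (1 : H) ∈ l.map f ↔ (1 : G) ∈ l := by
    rw [← map_one f, List.mem_map_of_injective hf]
  by_cases hl : (1 : G) ∈ l
  · simp [barMap_single, barNorm_single_of_one_mem, hl, one_mem]
  · simp [barMap_single, barNorm_single_of_one_notMem, hl, one_mem]

theorem barNorm_barCons_barNorm (u : MonoidAlgebra k G) (C : BarChain G k) :
    barNorm (barCons u (barNorm C)) = barNorm (barCons u C) := by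
  suffices h : (barCons.compl₂ barNorm).compr₂ barNorm = barCons.compr₂ (barNorm (k := k)) from
    LinearMap.congr_fun₂ h u C
  ext x l : 4
  by_cases hl : (1 : G) ∈ l
  · simp [barNorm_single_of_one_mem, barCons_single, hl]
  · simp [barNorm_single_of_one_notMem hl]

theorem barNorm_barCons_one (C : BarChain G k) :
    barNorm (barCons (MonoidAlgebra.single 1 1) C) = 0 := by
  suffices h : barNorm ∘ₗ barCons (MonoidAlgebra.single (1 : G) (1 : k)) = 0 from
    LinearMap.congr_fun h C
  ext l : 2
  simp [barCons_single, barNorm_single_of_one_mem]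

theorem perm_of_mem_support_shuffleList {a b l : List G}
    (hl : l ∈ (shuffleList a b : BarChain G k).support) : l.Perm (a ++ b) := by
  induction a generalizing b l with
  | nil =>
    rw [shuffleList] at hl
    exact .of_eq (Finset.mem_singleton.1 (Finsupp.support_single_subset hl))
  | cons x a iha =>
    induction b generalizing l with
    | nil =>
      rw [shuffleList] at hl
      · rw [List.append_nil]
        exact .of_eq (Finset.mem_singleton.1 (Finsupp.support_single_subset hl))
      · simp
    | cons y b ihb =>
      rw [shuffleList] at hl
      rcases Finset.mem_union.1 (Finsupp.support_add hl) with hl | hl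
      · obtain ⟨m, hm, rfl⟩ := Finset.mem_image.1 (Finsupp.mapDomain_support hl)
        exact (iha hm).cons x
      · obtain ⟨m, hm, rfl⟩ :=
          Finset.mem_image.1 (Finsupp.mapDomain_support (Finsupp.support_smul hl))
        exact ((ihb hm).cons y).trans List.perm_middle.symm

theorem barNorm_barSh (C E : BarChain G k) :
    barNorm (barSh (barNorm C) (barNorm E)) = barNorm (barSh C E) := by
  suffices h : (barSh.compl₁₂ barNorm barNorm).compr₂ barNorm =
      barSh.compr₂ (barNorm (G := G) (k := k)) from LinearMap.congr_fun₂ h C E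
  ext a b : 4
  by_cases h : (1 : G) ∈ a ++ b
  · have vanish : barNorm (shuffleList a b : BarChain G k) = 0 :=
      barNorm_eq_zero fun l hl => (perm_of_mem_support_shuffleList hl).mem_iff.2 h
    rcases List.mem_append.1 h with h | h <;>
      simp [barNorm_single_of_one_mem, h, barSh_single_single, vanish]
  · obtain ⟨ha, hb⟩ := not_or.1 (List.mem_append.not.1 h)
    simp [barNorm_single_of_one_notMem, ha, hb]

end Normalization

section Comparison

theorem barNorm_barWedge (v : List G) : barNorm (barWedge v : BarChain G k) = wedgeList v := by
  induction v with
  | nil => exact barNorm_single []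
  | cons x v ih =>
    calc
      barNorm (barWedge (x :: v))
      _ = barNorm (barSh (barNorm (Finsupp.single [x] 1)) (barNorm (barWedge v))) :=
        (barNorm_barSh _ _).symm
      _ = wedgeList (x :: v) := by rw [ih, barNorm_single]; rfl

theorem barNorm_barCons_barCons_barNorm (u w : MonoidAlgebra k G) (C : BarChain G k) :
    barNorm (barCons u (barCons w (barNorm C))) = barNorm (barCons u (barCons w C)) := by
  rw [← barNorm_barCons_barNorm, barNorm_barCons_barNorm w, barNorm_barCons_barNorm]

theorem zetaChain_succ {n : ℕ} (hn : n ≠ 0) (x : G) (s : ℕ) :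
    (zetaChain n x (s + 1) : BarChain G k) =
      barNorm (barCons (normElement k n x)
        (barCons (MonoidAlgebra.single x 1) (zetaChain n x s))) := by
  obtain ⟨m, rfl⟩ := Nat.exists_eq_succ_of_ne_zero hn
  have cons_pair (y : G) (l : List G) :
      barNorm (barCons (MonoidAlgebra.single y 1) (barCons (MonoidAlgebra.single x 1) (barSym l))) =
        (barSym (y :: x :: l) : BarChain G k) := by
    simp only [← barNorm_single, barNorm_barCons_barCons_barNorm, barCons_single]
  rw [normElement, Finset.sum_range_succ', pow_zero, Finset.sum_range, map_add, map_sum,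
    LinearMap.add_apply, map_add, barNorm_barCons_one, add_zero, LinearMap.sum_apply, map_sum]
  simp only [zetaChain, map_sum, cons_pair]
  rw [← (Fin.consEquiv fun _ : Fin (s + 1) => Fin (m + 1 - 1)).sum_comp, Fintype.sum_prod_type]
  simp [Fin.consEquiv]

theorem barNorm_barTower_normElement {n : ℕ} (hn : n ≠ 0) (x : G) (s : ℕ) :
    barNorm (barTower (normElement k n x) (MonoidAlgebra.single x 1) s) = zetaChain n x s := by
  induction s with
  | zero => simp [barTower, zetaChain, barNorm_single]
  | succ s ih => rw [zetaChain_succ hn, ← ih, barTower, barNorm_barCons_barCons_barNorm]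

theorem barBoundary_single_cons (x : G) (l : List G) :
    barBoundary (Finsupp.single (x :: l) 1 : BarChain G k) = Finsupp.single l 1 +
      ∑ j ∈ Finset.range l.length, (-1 : k) ^ (j + 1) • Finsupp.single (mergeAt (x :: l) j) 1 +
      (-1 : k) ^ (l.length + 1) • Finsupp.single (x :: l).dropLast 1 := by
  induction l generalizing x with
  | nil => simp [barBoundary_singleton]
  | cons y l ih =>
    have merge_zero : mergeAt (x :: y :: l) 0 = (x * y) :: l := by simp [mergeAt]
    have merge_succ (j : ℕ) : mergeAt (x :: y :: l) (j + 1) = x :: mergeAt (y :: l) j := by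
      simp [mergeAt]
    rw [← barCons_single x, barBoundary_barCons, ih, ← barCons_single y l, barMulHead_barCons,
      reducedMul_single_single, List.length_cons, Finset.sum_range_succ']
    simp only [merge_zero, merge_succ, List.dropLast_cons_cons, map_add, map_sub, map_sum,
      map_smul, LinearMap.sub_apply, barCons_single, pow_succ _ (_ + 1), mul_neg_one, neg_smul,
      Finset.sum_neg_distrib]
    simp only [zero_add, pow_one, neg_smul, one_smul]
    abel

theorem barNorm_barBoundary (C : BarChain G k) : barNorm (barBoundary C) = barD C := by
  suffices h : barNorm ∘ₗ barBoundary = barD (G := G) (k := k) from LinearMap.congr_fun h C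
  ext l : 2
  cases l with
  | nil => simp [barBoundary_nil, barD, barDList]
  | cons x l => simp [barBoundary_single_cons, barNorm_single, barD, barDList, -Finsupp.smul_single]

end Comparison

theorem stmt10_general {A : Type*} [CommGroup A] {k : Type*} [CommRing k] (ℓ : ℕ) (hℓ : ℓ ≠ 0)
    (hk : (ℓ : k) = 0) (ξ : A) (hξ : ξ ^ ℓ = 1) (s : ℕ) (v : List A) :
    ∃ c : BarChain A k,
      Finsupp.mapDomain (List.map (fun g : A => g⁻¹))
          (barNSh (zetaChain ℓ ξ s) (wedgeList v))
        - ((-1 : k) ^ (s + v.length)) • barNSh (zetaChain ℓ ξ s) (wedgeList v)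
        = barD c := by
  obtain ⟨c, hc⟩ := SModEq.sub_mem.1 (barMap_inv_barSh_smodEq hk hξ s v)
  have normalize : barNSh (zetaChain ℓ ξ s) (wedgeList v) = barNorm
      (barSh (barTower (normElement k ℓ ξ) (MonoidAlgebra.single ξ 1) s) (barWedge v)) := by
    rw [barNSh, ← barNorm_barTower_normElement hℓ, ← barNorm_barWedge, barNorm_barSh]
  refine ⟨c, ?_⟩
  rw [← barNorm_barBoundary, hc, map_sub, map_smul, barNorm_barMap inv_injective, ← normalize]
  rfl

/-- for `G` abelian and `σ : G → G` the inversion, the induced map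
on mod `ℓ` homology sends the class of `[ξ]^(s) ∧ ⟨v₁,...,v_i⟩` to `(-1)^{s+i}`
times itself (equality in homology expressed as "the difference is a boundary"). -/
theorem stmt10 {G : Type*} [CommGroup G] (ℓ : ℕ) (hℓ : ℓ.Prime)
    (ξ : G) (hξ : ξ ^ ℓ = 1) (s : ℕ) (v : List G) :
    ∃ c : BarChain G (ZMod ℓ),
      Finsupp.mapDomain (List.map (fun g : G => g⁻¹))
          (barNSh (zetaChain ℓ ξ s) (wedgeList v))
        - ((-1 : ZMod ℓ) ^ (s + v.length)) • barNSh (zetaChain ℓ ξ s) (wedgeList v)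
        = barD c := by
  exact stmt10_general ℓ hℓ.ne_zero (CharP.cast_eq_zero _ ℓ) ξ hξ s v
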